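/- Let A ∈ ℝ^{n×n} be symmetric with 0 ⪯ A ⪯ I and let W_0, …, W_N ∈ ℝ^{P×P} be orthogonal matrices. For X, Y ∈ ℝ^{n×P}, define U_0 = X, U_{m+1} = |(I − A)U_m W_m| and Ũ_0 = Y, Ũ_{m+1} = |(I − A)Ũ_m W_m|. Then Σ_{m=0}^N ‖A(U_m − Ũ_m)‖² ≤ ‖X − Y‖² − ‖U_{N+1} − Ũ_{N+1}‖². -/

import Mathlib

/-!
Each layer is a contraction with an explicit defect. Writing `D = U_m - V_m`, the entrywise
absolute value is 1-Lipschitz and right multiplication by an orthogonal matrix preserves the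
Frobenius norm, so `‖U_{m+1} - V_{m+1}‖² ≤ ‖(I - A) D‖²`. Moreover
`‖A D‖² + ‖(I - A) D‖² ≤ ‖D‖²`, because `A - A² = A (I - A) A + (I - A) A (I - A)` is positive
semidefinite (`frobSq_mul_add_frobSq_one_sub_mul_le`). Hence
`‖A D‖² ≤ ‖U_m - V_m‖² - ‖U_{m+1} - V_{m+1}‖²`, and the sum over `m` telescopes.
-/

open Matrix

/-- Squared Frobenius norm of a real matrix: `‖X‖² = Tr(XᵀX) = ∑ i j, X i j ^ 2`. -/
def frobSq {n P : ℕ} (X : Matrix (Fin n) (Fin P) ℝ) : ℝ := ∑ i, ∑ j, (X i j) ^ 2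

/-- The IGT recursion: `U 0 = X`, `U (m+1) = |(I - A) * U m * W m|` (entrywise absolute
value). -/
def igtSeq {n P : ℕ} (A : Matrix (Fin n) (Fin n) ℝ)
    (W : ℕ → Matrix (Fin P) (Fin P) ℝ) (X : Matrix (Fin n) (Fin P) ℝ) :
    ℕ → Matrix (Fin n) (Fin P) ℝ
  | 0 => X
  | m + 1 => ((1 - A) * igtSeq A W X m * W m).map (|·|)

/-- The squared Frobenius norm in trace form. -/
lemma frobSq_eq_trace {n P : ℕ} (X : Matrix (Fin n) (Fin P) ℝ) :
    frobSq X = (Xᵀ * X).trace := by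
  simp only [frobSq, Matrix.trace, Matrix.diag_apply, Matrix.mul_apply, Matrix.transpose_apply]
  rw [Finset.sum_comm]
  simp only [sq]

lemma frobSq_mul_of_orthogonal {n P : ℕ} (X : Matrix (Fin n) (Fin P) ℝ)
    (W : Matrix (Fin P) (Fin P) ℝ) (hW : Wᵀ * W = 1) : frobSq (X * W) = frobSq X := by
  have hW' : W * Wᵀ = 1 := mul_eq_one_comm.mp hW
  rw [frobSq_eq_trace, frobSq_eq_trace, Matrix.transpose_mul, Matrix.mul_assoc,
    Matrix.trace_mul_comm, Matrix.mul_assoc, Matrix.mul_assoc, hW', Matrix.mul_one]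

lemma frobSq_abs_sub_abs_le {n P : ℕ} (X Y : Matrix (Fin n) (Fin P) ℝ) :
    frobSq (X.map (|·|) - Y.map (|·|)) ≤ frobSq (X - Y) := by
  refine Finset.sum_le_sum fun i _ => Finset.sum_le_sum fun j _ => ?_
  simpa using sq_le_sq.mpr (abs_abs_sub_abs_le_abs_sub (X i j) (Y i j))

/-- The pair `(A, I - A)` is jointly a contraction. The defect `I - A² - (I - A)²` equals
`2 (A (I - A) A + (I - A) A (I - A))`, a sum of congruences of positive semidefinite matrices. -/
lemma frobSq_mul_add_frobSq_one_sub_mul_le {n P : ℕ} (A : Matrix (Fin n) (Fin n) ℝ)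
    (hA_symm : A.IsSymm) (hA_psd : A.PosSemidef) (hIA_psd : (1 - A).PosSemidef)
    (D : Matrix (Fin n) (Fin P) ℝ) :
    frobSq (A * D) + frobSq ((1 - A) * D) ≤ frobSq D := by
  have h1 := (hIA_psd.conjTranspose_mul_mul_same (A * D)).trace_nonneg
  have h2 := (hA_psd.conjTranspose_mul_mul_same ((1 - A) * D)).trace_nonneg
  rw [Matrix.conjTranspose_eq_transpose_of_trivial] at h1 h2
  have hT : Aᵀ = A := hA_symm
  have key : Dᵀ * D - (A * D)ᵀ * (A * D) - ((1 - A) * D)ᵀ * ((1 - A) * D)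
      = (2 : ℝ) • ((A * D)ᵀ * (1 - A) * (A * D)
        + ((1 - A) * D)ᵀ * A * ((1 - A) * D)) := by
    simp only [Matrix.transpose_mul, Matrix.transpose_sub, hT,
      Matrix.sub_mul, Matrix.mul_sub, Matrix.one_mul, Matrix.mul_one, Matrix.mul_assoc, two_smul]
    abel
  have ht := congrArg Matrix.trace key
  simp only [Matrix.trace_sub, Matrix.trace_smul, Matrix.trace_add, smul_eq_mul] at ht
  simp only [frobSq_eq_trace]
  linarith

/-- One layer: the inequality that is summed over `m`. -/
lemma igtSeq_step {n P : ℕ} (A : Matrix (Fin n) (Fin n) ℝ)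
    (hA_symm : A.IsSymm) (hA_psd : A.PosSemidef) (hIA_psd : (1 - A).PosSemidef)
    (W : ℕ → Matrix (Fin P) (Fin P) ℝ) (m : ℕ) (hW : (W m)ᵀ * W m = 1)
    (X Y : Matrix (Fin n) (Fin P) ℝ) :
    frobSq (A * (igtSeq A W X m - igtSeq A W Y m)) ≤
      frobSq (igtSeq A W X m - igtSeq A W Y m)
        - frobSq (igtSeq A W X (m + 1) - igtSeq A W Y (m + 1)) := by
  have h1 := frobSq_abs_sub_abs_le ((1 - A) * igtSeq A W X m * W m)
    ((1 - A) * igtSeq A W Y m * W m)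
  rw [← Matrix.sub_mul, ← Matrix.mul_sub, frobSq_mul_of_orthogonal _ _ hW] at h1
  have h2 := frobSq_mul_add_frobSq_one_sub_mul_le A hA_symm hA_psd hIA_psd
    (igtSeq A W X m - igtSeq A W Y m)
  simp only [igtSeq]
  linarith

/-- Let `A` be symmetric with `0 ⪯ A ⪯ I` and `W_0, …, W_N` orthogonal. With
the IGT recursions `U` (started at `X`) and `V` (started at `Y`),
`Σ_{m=0}^N ‖A(U_m − V_m)‖² ≤ ‖X − Y‖² − ‖U_{N+1} − V_{N+1}‖²`. -/
theorem igt_lipschitz_telescoped {n P : ℕ} (A : Matrix (Fin n) (Fin n) ℝ)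
    (hA_symm : A.IsSymm) (hA_psd : A.PosSemidef) (hIA_psd : (1 - A).PosSemidef)
    (N : ℕ) (W : ℕ → Matrix (Fin P) (Fin P) ℝ)
    (hW : ∀ m ≤ N, (W m)ᵀ * W m = 1)
    (X Y : Matrix (Fin n) (Fin P) ℝ) :
    ∑ m ∈ Finset.range (N + 1), frobSq (A * (igtSeq A W X m - igtSeq A W Y m)) ≤
      frobSq (X - Y) - frobSq (igtSeq A W X (N + 1) - igtSeq A W Y (N + 1)) := by
  calc _ ≤ ∑ m ∈ Finset.range (N + 1), (frobSq (igtSeq A W X m - igtSeq A W Y m)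
        - frobSq (igtSeq A W X (m + 1) - igtSeq A W Y (m + 1))) :=
        Finset.sum_le_sum fun m hm => igtSeq_step A hA_symm hA_psd hIA_psd W m
          (hW m (Nat.lt_succ_iff.mp (Finset.mem_range.mp hm))) X Y
    _ = _ := Finset.sum_range_sub'
        (fun m => frobSq (igtSeq A W X m - igtSeq A W Y m)) (N + 1)
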